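/- arXiv:0904.2407 — 2 statements merged into one kernel-verified Lean document; each statement's English description precedes it below -/
import Mathlib

section
/- Let w be in B_n, 1 ≤ i < j ≤ n, a := w(i), b := w(j), and suppose l(w(i,-j)) > l(w). Then l(w(i,-j)) - l(w) - 1 = 2 (N_{a,-b}(w[i,j-1]) + N_{a,-b}(±w[j+1,n]) + tau_{ab}). -/
/-!
The length is a sum over pairs of positions `p ≤ q`, and `w(i,-j)` changes only the pairs that
meet `{i, j}`. The proof evaluates the change position by position. Write `a = w(i)`, `b = w(j)`
and suppose first that `a ≺ -b` (`lenSum_sub`).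

* For a third position `k` with `c = w(k)`, collect the pairs formed by `k` with `i` and with `j`.
  Since negation reverses `≺`, nothing changes if `k < i`; the change is `2[a ≺ c ≺ -b]` if
  `i < k < j`, and `2[a ≺ c ≺ -b] + 2[a ≺ -c ≺ -b]` if `k > j`.
* The pairs inside `{i, j}` contribute `1 + 2 τ_{ab}` (`corner_change`).

If instead `-b ≺ a`, the same computation applied to `w(i,-j)`, which is taken back to `w` by the
same reflection, shows that the length drops, against the hypothesis. There is no other case,
because the absolute values of the entries of a window are distinct and nonzero.
-/

open scoped BigOperators

namespace HL

/-! ### The order `≺` on nonzero integers in `[-n,n]`: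
`1 ≺ 2 ≺ ... ≺ n ≺ -n ≺ -(n-1) ≺ ... ≺ -1`. -/

def slt (a b : ℤ) : Prop :=
  (0 < a ∧ b < 0) ∨ (0 < a ∧ 0 < b ∧ a < b) ∨ (a < 0 ∧ b < 0 ∧ a < b)

instance slt.dec (a b : ℤ) : Decidable (slt a b) := by unfold slt; infer_instance

def sle (a b : ℤ) : Prop := slt a b ∨ a = b

instance sle.dec (a b : ℤ) : Decidable (sle a b) := by unfold sle; infer_instance

/-! ### Signed permutations (windows), reflections acting on the right -/

/-- The right action of a reflection on a window (or column), with 1-based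
positions.  The reflection `(i, j)` with `j > 0` transposes positions `i` and
`j`; the reflection `(i, -j)` (i.e. `(i,\bar\jmath)`) with `i ≠ j` transposes
positions `i, j` and negates both entries; `(i, -i)` negates position `i`. -/
def applyRefl (l : List ℤ) (t : ℕ × ℤ) : List ℤ :=
  if 0 < t.2 then
    (l.set (t.1 - 1) (l.getD (t.2.toNat - 1) 0)).set (t.2.toNat - 1) (l.getD (t.1 - 1) 0)
  else
    if t.1 = (-t.2).toNat then l.set (t.1 - 1) (-(l.getD (t.1 - 1) 0))
    else (l.set (t.1 - 1) (-(l.getD ((-t.2).toNat - 1) 0))).set ((-t.2).toNat - 1)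
          (-(l.getD (t.1 - 1) 0))

def applyAll (w : List ℤ) (T : List (ℕ × ℤ)) : List ℤ := T.foldl applyRefl w

/-- The word `w[i,j] = w(i) w(i+1) ... w(j)`, 1-based and inclusive. -/
def word (l : List ℤ) (i j : ℕ) : List ℤ := (l.drop (i - 1)).take (j + 1 - i)

/-- `N_{ab}(u)` = number of letters `c` of the word `u` with `a ≺ c ≺ b`. -/
def Nab (a b : ℤ) (u : List ℤ) : ℕ :=
  (u.filter (fun c => decide (slt a c ∧ slt c b))).length

/-- `ℓ₊(w) = #{(k,l) : k < l, w(k) ≻ w(l)}`. -/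
def lplus (l : List ℤ) : ℕ :=
  (((Finset.range l.length) ×ˢ (Finset.range l.length)).filter
    (fun p => p.1 < p.2 ∧ slt (l.getD p.2 0) (l.getD p.1 0))).card

/-- `ℓ₋(w) = #{(k,l) : k ≤ l, w(k) ≻ -w(l)}`. -/
def lminus (l : List ℤ) : ℕ :=
  (((Finset.range l.length) ×ˢ (Finset.range l.length)).filter
    (fun p => p.1 ≤ p.2 ∧ slt (-(l.getD p.2 0)) (l.getD p.1 0))).card

/-- The Coxeter length of a signed permutation given by its window. -/
def len (l : List ℤ) : ℕ := lplus l + lminus l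

/-- The (finite) set of windows of all signed permutations in `B_n`. -/
def allWindows (n : ℕ) : Finset (List ℤ) :=
  Finset.image (fun w : Equiv.Perm (Fin n) × (Fin n → Bool) =>
    (List.finRange n).map (fun i =>
      if w.2 i then -(((w.1 i : ℕ) : ℤ) + 1) else ((w.1 i : ℕ) : ℤ) + 1)) Finset.univ

/-- `w`-admissibility of a sequence of reflections: a strictly decreasing
chain in Bruhat order (recorded via the length function). -/
def decChain : List ℤ → List (ℕ × ℤ) → Bool
  | _, [] => true
  | w, t :: ts => (decide (len (applyRefl w t) < len w)) && decChain (applyRefl w t) ts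

/-- Increasing-admissibility: a strictly increasing chain. -/
def incChain : List ℤ → List (ℕ × ℤ) → Bool
  | _, [] => true
  | w, t :: ts => (decide (len w < len (applyRefl w t))) && incChain (applyRefl w t) ts

/-- The subsequence of a chain `Γ` selected by a set `J` of (0-based) positions. -/
def selChain (Γ : List (ℕ × ℤ)) (J : Finset ℕ) : List (ℕ × ℤ) :=
  (J.sort (· ≤ ·)).map (fun j => Γ.getD j (0, 0))

/-! ### The `λ`-chain of type `C_n` -/

/-- `Γ'_j = ((1,-j),(2,-j),...,(j-1,-j))`. -/
def gammaPrime (j : ℕ) : List (ℕ × ℤ) := (List.range (j - 1)).map (fun r => (r + 1, -(j : ℤ)))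

/-- `Γ_j(k) = ((1,-j),...,(j-1,-j),(j,-(k+1)),...,(j,-n),(j,-j),(j,n),...,(j,k+1))`. -/
def gammaJK (n j k : ℕ) : List (ℕ × ℤ) :=
  gammaPrime j
    ++ (List.range (n - k)).map (fun r => (j, -((k + 1 + r : ℕ) : ℤ)))
    ++ [(j, -(j : ℤ))]
    ++ (List.range (n - k)).map (fun r => (j, ((n - r : ℕ) : ℤ)))

/-- `Γ(k) = Γ'_2 ⋯ Γ'_k Γ_1(k) ⋯ Γ_k(k)` (type `C_n`). -/
def gammaChain (n k : ℕ) : List (ℕ × ℤ) :=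
  ((List.range (k - 1)).map (fun r => gammaPrime (r + 2))).flatten
    ++ ((List.range k).map (fun r => gammaJK n (r + 1) k)).flatten

/-- `λ'_i = #{j : λ_j ≥ i}`, the conjugate partition. -/
def conj (n : ℕ) (lam : Fin n → ℕ) (i : ℕ) : ℕ :=
  (Finset.univ.filter (fun j : Fin n => i ≤ lam j)).card

/-- `λ_1`, the largest part. -/
def lamOne (n : ℕ) (lam : Fin n → ℕ) : ℕ := Finset.univ.sup lam

/-- The fixed `λ`-chain `Γ = Γ^{λ_1} Γ^{λ_1-1} ⋯ Γ^1` with `Γ^i = Γ(λ'_i)`. -/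
def lambdaChain (n : ℕ) (lam : Fin n → ℕ) : List (ℕ × ℤ) :=
  ((List.range (lamOne n lam)).map
    (fun r => gammaChain n (conj n lam (lamOne n lam - r)))).flatten

/-- The set `A(λ)` of admissible pairs `(w, J)`. -/
def ASet (n : ℕ) (lam : Fin n → ℕ) : Set (List ℤ × Finset ℕ) :=
  {p | p.1 ∈ allWindows n ∧ p.2 ⊆ Finset.range (lambdaChain n lam).length ∧
    decChain p.1 (selChain (lambdaChain n lam) p.2) = true}

/-! ### Roots, coroots, affine reflections, and the weight `μ(T)` -/

/-- The root of type `C_n` corresponding to a symbol: `(i,j) ↦ ε_i - ε_j`,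
`(i,-j) ↦ ε_i + ε_j` for `i < j`, and `(i,-i) ↦ 2ε_i`. -/
def rootVec (n : ℕ) (β : ℕ × ℤ) : Fin n → ℤ := fun r =>
  (if ((r : ℕ) + 1 : ℤ) = (β.1 : ℤ) then 1 else 0) +
  (if 0 < β.2 then (if ((r : ℕ) + 1 : ℤ) = β.2 then -1 else 0)
   else (if ((r : ℕ) + 1 : ℤ) = -β.2 then 1 else 0))

/-- The coroot (type `C_n`): `(2ε_i)^∨ = ε_i`, the long rootss are unchanged. -/
def corootVec (n : ℕ) (β : ℕ × ℤ) : Fin n → ℤ :=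
  if β.2 = -(β.1 : ℤ) then (fun r => if ((r : ℕ) + 1 : ℤ) = (β.1 : ℤ) then 1 else 0)
  else rootVec n β

/-- Standard inner product on `ℤ^n`. -/
def ip (n : ℕ) (u v : Fin n → ℤ) : ℤ := ∑ r, u r * v r

/-- The affine reflection in the hyperplane `{v : ⟨v, β^∨⟩ = c}`. -/
def affRefl (n : ℕ) (β : ℕ × ℤ) (c : ℤ) (v : Fin n → ℤ) : Fin n → ℤ :=
  fun r => v r - (ip n v (corootVec n β) - c) * rootVec n β r

/-- `l_k = #{j ≤ k : β_j = β_k}` (here `k` is 0-based). -/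
def lCount (Γ : List (ℕ × ℤ)) (k : ℕ) : ℕ := (Γ.take (k + 1)).count (Γ.getD k (0, 0))

/-- `μ(J) = \hat r_{j_1} ⋯ \hat r_{j_s}(λ)` for `J = {j_1 < ... < j_s}`. -/
def muJ (n : ℕ) (Γ : List (ℕ × ℤ)) (lamVec : Fin n → ℤ) (J : Finset ℕ) : Fin n → ℤ :=
  (J.sort (· ≤ ·)).foldr (fun j v => affRefl n (Γ.getD j (0, 0)) ((lCount Γ j : ℕ) : ℤ) v) lamVec

/-- The linear action of a signed permutation (given by its window) on `ℤ^n`: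
`w(ε_i) = ε_{w(i)}` with `ε_{-i} = -ε_i`. -/
def wAct (n : ℕ) (w : List ℤ) (v : Fin n → ℤ) : Fin n → ℤ := fun r =>
  ∑ i : Fin n, ((if w.getD i 0 = ((r : ℕ) + 1 : ℤ) then v i else 0) +
    (if w.getD i 0 = -(((r : ℕ) + 1 : ℤ)) then -(v i) else 0))

def lamVec (n : ℕ) (lam : Fin n → ℕ) : Fin n → ℤ := fun i => (lam i : ℤ)

/-! ### Fillings of the doubled shape `\hat λ` -/

/-- A filling of the doubled shape, recorded by its primed columns `C'_{i,k}`
(`Cp i k`) and unprimed columns `C_{i,j}` (`Cu i j`). -/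
structure Filling where
  Cp : ℕ → ℕ → List ℤ
  Cu : ℕ → ℕ → List ℤ

def validP (n : ℕ) (lam : Fin n → ℕ) (i k : ℕ) : Prop :=
  1 ≤ i ∧ i ≤ lamOne n lam ∧ 2 ≤ k ∧ k ≤ conj n lam i

def validU (n : ℕ) (lam : Fin n → ℕ) (i j : ℕ) : Prop :=
  1 ≤ i ∧ i ≤ lamOne n lam ∧ 1 ≤ j ∧ j ≤ conj n lam i ∧ (i = 1 → j = 1)

instance validP.dec (n : ℕ) (lam : Fin n → ℕ) (i k : ℕ) : Decidable (validP n lam i k) := by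
  unfold validP; infer_instance

instance validU.dec (n : ℕ) (lam : Fin n → ℕ) (i j : ℕ) : Decidable (validU n lam i j) := by
  unfold validU; infer_instance

/-- The right neighbour `C'_{i,k+1}` of `C'_{i,k}`, with the convention
`C'_{i,λ'_i+1} = C_{i,1}`. -/
def CpNxt (n : ℕ) (lam : Fin n → ℕ) (F : Filling) (i k : ℕ) : List ℤ :=
  if k < conj n lam i then F.Cp i (k + 1) else F.Cu i 1

/-- The right neighbour `C_{i,j+1}` of `C_{i,j}`, with the conventions
`C_{i,λ'_i+1} = C'_{i-1,2}` (if `λ'_{i-1} > 1`) and `C_{i,λ'_i+1} = C_{i-1,1}`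
(if `λ'_{i-1} = 1`). -/
def CuNxt (n : ℕ) (lam : Fin n → ℕ) (F : Filling) (i j : ℕ) : List ℤ :=
  if j < conj n lam i then F.Cu i (j + 1)
  else if 2 ≤ conj n lam (i - 1) then F.Cp (i - 1) 2 else F.Cu (i - 1) 1

/-- No two entries `a, b` of a column with `a = ±b`. -/
def colDistinct (c : List ℤ) : Prop :=
  ∀ p q : ℕ, p < q → q < c.length →
    c.getD p 0 ≠ c.getD q 0 ∧ c.getD p 0 ≠ -(c.getD q 0)

/-- `R = (r_1 < r_2 < ... < r_p)` with `1 ≤ r_t < j ≤ d`. -/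
def sortedR (R : List ℕ) (j d : ℕ) : Prop :=
  List.Chain' (· < ·) R ∧ (∀ r ∈ R, 1 ≤ r ∧ r < j) ∧ 1 ≤ j ∧ j ≤ d

/-- `D (r_1,-j) (r_2,-j) ⋯ (r_p,-j)`. -/
def cycleApply (D : List ℤ) (R : List ℕ) (j : ℕ) : List ℤ :=
  R.foldl (fun E r => applyRefl E (r, -(j : ℤ))) D

/-- The relation between `C_{i,j+1}[1,λ'_i] = E` and `C_{i,j} = D` in a filling:
`E` differs from `D' = D(r_1,-j)⋯(r_p,-j)` only in position `j`,
`E(j) ∉ {±D'(r) : r ≠ j}` and `E(j) ⪯ D'(j)`. -/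
def unprimedTrans (D E : List ℤ) (R : List ℕ) (j d : ℕ) : Prop :=
  (∀ r, 1 ≤ r → r ≤ d → r ≠ j →
    E.getD (r - 1) 0 = (cycleApply D R j).getD (r - 1) 0) ∧
  (∀ r, 1 ≤ r → r ≤ d → r ≠ j →
    E.getD (j - 1) 0 ≠ (cycleApply D R j).getD (r - 1) 0 ∧
    E.getD (j - 1) 0 ≠ -((cycleApply D R j).getD (r - 1) 0)) ∧
  sle (E.getD (j - 1) 0) ((cycleApply D R j).getD (j - 1) 0)

/-- The set `F(λ)` of fillings of the doubled shape `\hat λ`. -/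
def FSet (n : ℕ) (lam : Fin n → ℕ) : Set Filling :=
  {F |
    -- shape
    (∀ i k, (validP n lam i k → (F.Cp i k).length = conj n lam i) ∧
      (¬ validP n lam i k → F.Cp i k = [])) ∧
    (∀ i j, (validU n lam i j → (F.Cu i j).length = conj n lam i) ∧
      (¬ validU n lam i j → F.Cu i j = [])) ∧
    -- entries lie in `{±1, ..., ±n}`
    (∀ i k, validP n lam i k → ∀ a ∈ F.Cp i k, 1 ≤ a.natAbs ∧ a.natAbs ≤ n) ∧
    (∀ i j, validU n lam i j → ∀ a ∈ F.Cu i j, 1 ≤ a.natAbs ∧ a.natAbs ≤ n) ∧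
    -- (1) rows weakly decrease from left to right
    (∀ i k, validP n lam i k → ∀ r, 1 ≤ r → r ≤ conj n lam i →
      sle ((CpNxt n lam F i k).getD (r - 1) 0) ((F.Cp i k).getD (r - 1) 0)) ∧
    (∀ i j, 2 ≤ i → validU n lam i j → ∀ r, 1 ≤ r → r ≤ conj n lam i →
      sle ((CuNxt n lam F i j).getD (r - 1) 0) ((F.Cu i j).getD (r - 1) 0)) ∧
    -- (2) no column contains `a, b` with `a = ±b`
    (∀ i k, validP n lam i k → colDistinct (F.Cp i k)) ∧
    (∀ i j, validU n lam i j → colDistinct (F.Cu i j)) ∧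
    -- (3) primed transitions: `C'_{i,k+1} = C'_{i,k}(r_1,-k)⋯(r_p,-k)`
    (∀ i k, validP n lam i k → ∃ R : List ℕ, sortedR R k (conj n lam i) ∧
      CpNxt n lam F i k = cycleApply (F.Cp i k) R k) ∧
    -- (3) unprimed transitions
    (∀ i j, 2 ≤ i → validU n lam i j → ∃ R : List ℕ, sortedR R j (conj n lam i) ∧
      unprimedTrans (F.Cu i j) ((CuNxt n lam F i j).take (conj n lam i)) R j (conj n lam i))}

/-! ### The filling map `f` -/

/-- Offset in `Γ` of the beginning of block `Γ^i` (the blocks are listed for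
`i = λ_1` down to `1`). -/
def offsetBlock (n : ℕ) (lam : Fin n → ℕ) (i : ℕ) : ℕ :=
  ∑ r ∈ Finset.Ico (i + 1) (lamOne n lam + 1), (gammaChain n (conj n lam r)).length

/-- Offset in `Γ` of the beginning of the factor `Γ'_{i,k}`.-/
def offsetP (n : ℕ) (lam : Fin n → ℕ) (i k : ℕ) : ℕ :=
  offsetBlock n lam i + ∑ j ∈ Finset.Ico 2 k, (gammaPrime j).length

/-- Offset in `Γ` of the beginning of the factor `Γ_{i,j}`.-/
def offsetU (n : ℕ) (lam : Fin n → ℕ) (i j : ℕ) : ℕ :=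
  offsetBlock n lam i + (∑ k ∈ Finset.Ico 2 (conj n lam i + 1), (gammaPrime k).length)
    + ∑ j' ∈ Finset.Ico 1 j, (gammaJK n j' (conj n lam i)).length

/-- `π = w ⋅ (all selected reflections at positions < off)`. -/
def piW (n : ℕ) (lam : Fin n → ℕ) (w : List ℤ) (J : Finset ℕ) (off : ℕ) : List ℤ :=
  applyAll w (selChain (lambdaChain n lam) (J.filter (fun x => x < off)))

/-- The filling map `f`, sending an (admissible) pair `(w, J)` to a filling of
the doubled shape `\hat λ`. -/
def fMap (n : ℕ) (lam : Fin n → ℕ) (w : List ℤ) (J : Finset ℕ) : Filling where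
  Cp := fun i k => if validP n lam i k
    then (piW n lam w J (offsetP n lam i k)).take (conj n lam i) else []
  Cu := fun i j => if validU n lam i j
    then (piW n lam w J (offsetU n lam i j)).take (conj n lam i) else []

/-! ### Content of a filling -/

/-- The columns `\bar{C}^i = C'_{i,2} C_{i,1}` (left to right, `i = λ_1, ..., 1`)
of the compressed filling `\barσ` of shape `2λ`; by the conventions,
`C'_{i,2} = C_{i,1}` when `λ'_i = 1`. -/
def compCols (n : ℕ) (lam : Fin n → ℕ) (F : Filling) : List (List ℤ) :=
  ((List.range (lamOne n lam)).map (fun t =>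
    [(if 2 ≤ conj n lam (lamOne n lam - t) then F.Cp (lamOne n lam - t) 2
      else F.Cu (lamOne n lam - t) 1), F.Cu (lamOne n lam - t) 1])).flatten

/-- The content of a list of columns: the `i`-th coordinate is half the
difference between the numbers of occurrences of `i` and of `-i`. -/
def ctCols (n : ℕ) (cols : List (List ℤ)) : Fin n → ℚ := fun r =>
  ((cols.flatten.count (((r : ℕ) + 1 : ℕ) : ℤ) : ℚ) -
    (cols.flatten.count (-(((r : ℕ) + 1 : ℕ) : ℤ)) : ℚ)) / 2

/-- The content `ct(σ)` of a filling `σ` of `\hatλ`. -/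
def ctQ (n : ℕ) (lam : Fin n → ℕ) (F : Filling) : Fin n → ℚ :=
  ctCols n (compCols n lam F)

/-! ### The statistics `N(D,C)` and `des(D,C)` -/

/-- `σ_{ab} = 1` if `a` and `b` are both negative, else `0`. -/
def sigmaAB (a b : ℤ) : ℕ := if a < 0 ∧ b < 0 then 1 else 0

def allEntries (n : ℕ) : List ℤ :=
  (List.range n).map (fun r => ((r + 1 : ℕ) : ℤ)) ++
    (List.range n).map (fun r => -((r + 1 : ℕ) : ℤ))

/-- Case 1: `N(D, D(r,-j)) = N_{\bar b, a}(D[r+1,j-1]) +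
#{c : \bar b ≺ c ≺ a, c ∉ ±D[1,j]} + σ_{ab}` where `a = D(r)`, `b = D(j)`. -/
def N1 (n : ℕ) (D : List ℤ) (r j : ℕ) : ℕ :=
  Nab (-(D.getD (j - 1) 0)) (D.getD (r - 1) 0) (word D (r + 1) (j - 1)) +
  ((allEntries n).filter (fun c => decide (slt (-(D.getD (j - 1) 0)) c ∧
    slt c (D.getD (r - 1) 0) ∧ c ∉ D.take j ∧ c ∉ (D.take j).map (fun x => -x)))).length +
  sigmaAB (D.getD (r - 1) 0) (D.getD (j - 1) 0)

/-- Case 2: `N(D, D(r_1,-j)⋯(r_p,-j)) = ∑ N(D_{t-1}, D_t)`. -/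
def cycleN (n : ℕ) : List ℤ → List ℕ → ℕ → ℕ
  | _, [], _ => 0
  | D, r :: rs, j => N1 n D r j + cycleN n (applyRefl D (r, -(j : ℤ))) rs j

/-- The possible values `(N(D,C), des(D,C))` arising from the case-by-case
definition of the statistics (cases 0, 2, 3; case 1 is case 2 with `p = 1`).
If `C` is one box taller than `D`, `C` is replaced by `C[1,d]`. -/
def NdesCand (n : ℕ) (D C : List ℤ) : Set (ℕ × ℕ) :=
  {x |
    (C.take D.length = D ∧ x = (0, 0)) ∨
    (∃ j R, sortedR R j D.length ∧ R ≠ [] ∧ C.take D.length = cycleApply D R j ∧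
      x = (cycleN n D R j, R.length)) ∨
    (∃ j R, sortedR R j D.length ∧
      (∀ r, 1 ≤ r → r ≤ D.length → r ≠ j →
        (C.take D.length).getD (r - 1) 0 = (cycleApply D R j).getD (r - 1) 0) ∧
      (∀ r, 1 ≤ r → r ≤ D.length → r ≠ j →
        (C.take D.length).getD (j - 1) 0 ≠ (cycleApply D R j).getD (r - 1) 0 ∧
        (C.take D.length).getD (j - 1) 0 ≠ -((cycleApply D R j).getD (r - 1) 0)) ∧
      slt ((C.take D.length).getD (j - 1) 0) ((cycleApply D R j).getD (j - 1) 0) ∧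
      x = (cycleN n D R j +
        Nab ((C.take D.length).getD (j - 1) 0) ((cycleApply D R j).getD (j - 1) 0)
          (word D (j + 1) D.length), R.length + 1))}

noncomputable def Nstat (n : ℕ) (D C : List ℤ) : ℕ :=
  sInf {v | ∃ d, (v, d) ∈ NdesCand n D C}

noncomputable def desStat (n : ℕ) (D C : List ℤ) : ℕ :=
  sInf {d | ∃ v, (v, d) ∈ NdesCand n D C}

/-- All columns of a filling of `\hatλ`, listed from left to right. -/
def colList (n : ℕ) (lam : Fin n → ℕ) (F : Filling) : List (List ℤ) :=
  ((List.range (lamOne n lam)).map (fun t =>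
    ((List.range (conj n lam (lamOne n lam - t) - 1)).map
      (fun s => F.Cp (lamOne n lam - t) (s + 2))) ++
    (if lamOne n lam - t = 1 then [F.Cu 1 1]
     else (List.range (conj n lam (lamOne n lam - t))).map
      (fun s => F.Cu (lamOne n lam - t) (s + 1))))).flatten

/-- Sum of a binary statistic over adjacent pairs of a list. -/
def adjSumN (f : List ℤ → List ℤ → ℕ) : List (List ℤ) → ℕ
  | a :: b :: rest => f a b + adjSumN f (b :: rest)
  | _ => 0

/-- `N(σ) = ∑_{i=1}^{m-1} N(C_{i+1}, C_i) + ℓ₊(C_1)`. -/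
noncomputable def Nsigma (n : ℕ) (lam : Fin n → ℕ) (F : Filling) : ℕ :=
  adjSumN (Nstat n) (colList n lam F) + lplus ((colList n lam F).getLastD [])

/-- `des(σ) = ∑_{i=1}^{m-1} des(C_{i+1}, C_i)`. -/
noncomputable def desSigma (n : ℕ) (lam : Fin n → ℕ) (F : Filling) : ℕ :=
  adjSumN (desStat n) (colList n lam F)

/-! ### Statistics on fillings of the plain shape `λ` (for Proposition 2.2) -/

/-- The descent statistic of a filling of the Young diagram of `λ`, whose
columns are listed from left to right. -/
def desTau (cols : List (List ℤ)) : ℕ :=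
  adjSumN (fun L R => ((Finset.range L.length).filter
    (fun r => slt (R.getD r 0) (L.getD r 0))).card) cols

/-- The complementary inversion statistic `cinv = n(λ) - inv` of a filling of
the Young diagram of `λ` (columns listed from left to right, `C_k` being the
`k`-th column from the right). -/
def cinvTau (cols : List (List ℤ)) : ℕ :=
  ∑ q ∈ Finset.range cols.length,
    (((Finset.range (cols.getD q []).length) ×ˢ (Finset.range (cols.getD q []).length)).filter
      (fun pp => pp.1 < pp.2 ∧
        (((1 ≤ q ∧ pp.2 < (cols.getD (q - 1) []).length) ∧
            slt ((cols.getD q []).getD pp.2 0) ((cols.getD q []).getD pp.1 0) ∧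
            slt ((cols.getD q []).getD pp.1 0) ((cols.getD (q - 1) []).getD pp.2 0)) ∨
          (¬ (1 ≤ q ∧ pp.2 < (cols.getD (q - 1) []).length) ∧
            slt ((cols.getD q []).getD pp.2 0) ((cols.getD q []).getD pp.1 0))))).card

/-! ### Chains for the root systems `C_n` and `B_n` and the conditions (R1), (R2) -/

def isPosRootC (n : ℕ) (β : ℕ × ℤ) : Prop :=
  (1 ≤ β.1 ∧ (β.1 : ℤ) < β.2 ∧ β.2 ≤ (n : ℤ)) ∨
  (1 ≤ β.1 ∧ 0 < -β.2 ∧ (β.1 : ℤ) ≤ -β.2 ∧ -β.2 ≤ (n : ℤ))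

/-- Positive roots of `B_n` use the same symbols; `(i,-i)` encodes `ε_i`. -/
def isPosRootB (n : ℕ) (β : ℕ × ℤ) : Prop := isPosRootC n β

/-- The root of type `B_n` of a symbol: as in type `C` except `(i,-i) ↦ ε_i`. -/
def rootVecB (n : ℕ) (β : ℕ × ℤ) : Fin n → ℤ :=
  if β.2 = -(β.1 : ℤ) then (fun r => if ((r : ℕ) + 1 : ℤ) = (β.1 : ℤ) then 1 else 0)
  else rootVec n β

/-- The coroot of type `B_n`: `ε_i^∨ = 2ε_i`, long roots unchanged. -/
def corootVecB (n : ℕ) (β : ℕ × ℤ) : Fin n → ℤ :=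
  if β.2 = -(β.1 : ℤ) then (fun r => if ((r : ℕ) + 1 : ℤ) = (β.1 : ℤ) then 2 else 0)
  else rootVec n β

/-- `ω_k` in type `C_n`. -/
def omegaC (n k : ℕ) : Fin n → ℤ := fun r => if (r : ℕ) + 1 ≤ k then 1 else 0

/-- `ω_k` in type `B_n` (`ω_n` is half the sum of the `ε_i`). -/
def omegaB (n k : ℕ) : Fin n → ℚ :=
  if k = n then (fun _ => 1/2) else (fun r => if (r : ℕ) + 1 ≤ k then 1 else 0)

/-- type `B`: `Γ'_j = ((1,-j),...,(j-1,-j),(j))`. -/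
def gammaPrimeB (j : ℕ) : List (ℕ × ℤ) := gammaPrime j ++ [(j, -(j : ℤ))]

/-- type `B`: `Γ(k) = Γ'_1 ⋯ Γ'_k Γ_1(k) ⋯ Γ_k(k)` for `k < n`, and
`Γ(n) = Γ'_1 ⋯ Γ'_n`. -/
def gammaChainB (n k : ℕ) : List (ℕ × ℤ) :=
  ((List.range k).map (fun r => gammaPrimeB (r + 1))).flatten
    ++ (if k = n then [] else ((List.range k).map (fun r => gammaJK n (r + 1) k)).flatten)

/-- `(R2)`: the subsequence of all occurrences of `α, β, γ` is a concatenation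
of consecutive pairs `(γ, α)` or `(γ, β)`. -/
def altPairs (g a b : ℕ × ℤ) : List (ℕ × ℤ) → Prop
  | [] => True
  | [_] => False
  | x :: y :: rest => x = g ∧ (y = a ∨ y = b) ∧ altPairs g a b rest

/-! ### Real vector space versions (for hyperplanes) -/

def ipR (n : ℕ) (u v : Fin n → ℝ) : ℝ := ∑ r, u r * v r

def affReflR (n : ℕ) (β : ℕ × ℤ) (c : ℝ) (v : Fin n → ℝ) : Fin n → ℝ :=
  fun r => v r - (ipR n v (fun s => ((corootVec n β s : ℤ) : ℝ)) - c) *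
    ((rootVec n β r : ℤ) : ℝ)

def wActR (n : ℕ) (w : List ℤ) (v : Fin n → ℝ) : Fin n → ℝ := fun r =>
  ∑ i : Fin n, ((if w.getD i 0 = ((r : ℕ) + 1 : ℤ) then v i else 0) +
    (if w.getD i 0 = -(((r : ℕ) + 1 : ℤ)) then -(v i) else 0))

/-- `γ^∨ = (2/⟨γ,γ⟩) γ`. -/
noncomputable def corootOfR (n : ℕ) (v : Fin n → ℝ) : Fin n → ℝ :=
  fun r => (2 / ipR n v v) * v r

/-- The part of the compressed filling of shape `2λ` consisting of the columns
numbered `2λ_1, 2λ_1 - 1, ..., q` (`\barσ[q]`); column `2i` is `C'_{i,2}` and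
column `2i-1` is `C_{i,1}`. -/
def compColsGe (n : ℕ) (lam : Fin n → ℕ) (F : Filling) (q : ℕ) : List (List ℤ) :=
  ((List.range (lamOne n lam)).map (fun t =>
    (if q ≤ 2 * (lamOne n lam - t) then
      [(if 2 ≤ conj n lam (lamOne n lam - t) then F.Cp (lamOne n lam - t) 2
        else F.Cu (lamOne n lam - t) 1)] else []) ++
    (if q ≤ 2 * (lamOne n lam - t) - 1 then [F.Cu (lamOne n lam - t) 1] else []))).flatten

/-! ### The chains `Δ` and `Φ` of Section 6 -/

/-- `Δ = ((1,p+1),...,(1,n),(1,-1),(1,-n),(1,-(n-1)),...,(1,-(p+1)))`. -/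
def deltaChain (n p : ℕ) : List (ℕ × ℤ) :=
  (List.range (n - p)).map (fun r => (1, ((p + 1 + r : ℕ) : ℤ)))
    ++ [(1, (-1 : ℤ))]
    ++ (List.range (n - p)).map (fun r => (1, -((n - r : ℕ) : ℤ)))

/-- The suffix `Δ_{\bar s}` of `Δ` beginning with `(1,-s)`. -/
def deltaSuffixNeg (p s : ℕ) : List (ℕ × ℤ) :=
  (List.range (s - p)).map (fun r => (1, -((s - r : ℕ) : ℤ)))

/-- The suffix `Δ_{\bar 1}` of `Δ` beginning with `(1,-1)`. -/
def deltaSuffixBar1 (n p : ℕ) : List (ℕ × ℤ) :=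
  [(1, (-1 : ℤ))] ++ (List.range (n - p)).map (fun r => (1, -((n - r : ℕ) : ℤ)))

/-- The suffix `Δ_s` of `Δ` beginning with `(1,s)` (for `p < s ≤ n`). -/
def deltaSuffixPos (n p s : ℕ) : List (ℕ × ℤ) :=
  (List.range (n + 1 - s)).map (fun r => (1, ((s + r : ℕ) : ℤ)))
    ++ [(1, (-1 : ℤ))]
    ++ (List.range (n - p)).map (fun r => (1, -((n - r : ℕ) : ℤ)))

/-- `Φ = ((1,-1),(1,-2),(2,-2),...,(1,-n),...,(n-1,-n),(n,-n))`. -/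
def phiChain (n : ℕ) : List (ℕ × ℤ) :=
  ((List.range n).map (fun jm =>
    (List.range (jm + 1)).map (fun im => (im + 1, -((jm + 1 : ℕ) : ℤ))))).flatten

/-- The suffix `Φ_{ij}` of `Φ` beginning with `(i,-j)`. -/
def phiSuffix (n i j : ℕ) : List (ℕ × ℤ) := (phiChain n).drop ((j - 1) * j / 2 + (i - 1))

/-- `ℓ^{ij}_-(w) = #{(k,l) : k ≤ l, (k,-l)` strictly precedes `(i,-j)` in `Φ`,
`w(k) ≻ -w(l)}`. -/
def lminusBefore (w : List ℤ) (i j : ℕ) : ℕ :=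
  (((Finset.range w.length) ×ˢ (Finset.range w.length)).filter
    (fun p => p.1 ≤ p.2 ∧ (p.2 + 1 < j ∨ (p.2 + 1 = j ∧ p.1 + 1 < i)) ∧
      slt (-(w.getD p.2 0)) (w.getD p.1 0))).card


/-! ### The length as a double sum, and the order `≺` -/

/-- Indicator of `x ≺ y`, as an integer. -/
def sltInd (x y : ℤ) : ℤ := if slt x y then 1 else 0

/-- Indicator of `a ≺ c ≺ b`, as an integer. -/
def betweenInd (a b c : ℤ) : ℤ := if slt a c ∧ slt c b then 1 else 0

/-- Contribution of the pair of (0-based) positions `(p, q)` to the length of the window `f`. -/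
def pairTerm (f : ℕ → ℤ) (p q : ℕ) : ℤ :=
  (if p < q then sltInd (f q) (f p) else 0) + (if p ≤ q then sltInd (-(f q)) (f p) else 0)

/-- The length of the window `f(0), …, f(n-1)` as a double sum. -/
def lenSum (n : ℕ) (f : ℕ → ℤ) : ℤ :=
  ∑ p ∈ Finset.range n, ∑ q ∈ Finset.range n, pairTerm f p q

lemma len_eq_lenSum (l : List ℤ) : (len l : ℤ) = lenSum l.length (fun k => l.getD k 0) := by
  unfold len lplus lminus lenSum
  rw [Finset.card_filter, Finset.card_filter, Finset.sum_product, Finset.sum_product]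
  push_cast
  rw [← Finset.sum_add_distrib]
  refine Finset.sum_congr rfl fun p _ => ?_
  rw [← Finset.sum_add_distrib]
  refine Finset.sum_congr rfl fun q _ => ?_
  unfold pairTerm sltInd
  simp only [ite_and]

lemma slt_neg_neg (x y : ℤ) : slt (-x) (-y) ↔ slt y x := by
  unfold slt; omega

lemma sltInd_neg_neg (x y : ℤ) : sltInd (-x) (-y) = sltInd y x := by
  simp only [sltInd, slt_neg_neg]

lemma sltInd_neg_left (x y : ℤ) : sltInd (-x) y = sltInd (-y) x := by
  rw [← sltInd_neg_neg, neg_neg]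

lemma sltInd_neg_right (x y : ℤ) : sltInd x (-y) = sltInd y (-x) := by
  rw [← sltInd_neg_neg, neg_neg]

lemma sltInd_sub_right {a b c : ℤ} (hab : slt a b) (hc : c ≠ 0) (hca : c ≠ a) (hcb : c ≠ b) :
    sltInd c b - sltInd c a = betweenInd a b c := by
  unfold sltInd betweenInd
  unfold slt at *
  split_ifs <;> omega

lemma sltInd_sub_left {a b c : ℤ} (hab : slt a b) (hc : c ≠ 0) (hca : c ≠ a) (hcb : c ≠ b) :
    sltInd a c - sltInd b c = betweenInd a b c := by
  unfold sltInd betweenInd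
  unfold slt at *
  split_ifs <;> omega

lemma betweenInd_neg (a b c : ℤ) : betweenInd (-b) (-a) c = betweenInd a b (-c) := by
  unfold betweenInd slt
  split_ifs <;> omega

lemma betweenInd_self (a b : ℤ) : betweenInd a b a = 0 := by
  unfold betweenInd slt
  split_ifs <;> omega

/-- The contribution of the positions `i`, `j` themselves. -/
lemma corner_change {a b : ℤ} (hab : slt a (-b)) :
    (sltInd (-a) (-b) + sltInd a (-b) + sltInd b (-b) + sltInd a (-a))
      - (sltInd b a + sltInd (-b) a + sltInd (-a) a + sltInd (-b) b)
      = 1 + 2 * (if 0 < a ∧ 0 < b then 1 else 0) := by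
  have hdiag : ∀ x : ℤ, (slt x (-x) ↔ 0 < x) ∧ (slt (-x) x ↔ x < 0) := by
    intro x; unfold slt; omega
  have hba : ¬ slt (-b) a := by unfold slt at *; omega
  rw [sltInd_neg_neg]
  simp only [sltInd, (hdiag _).1, (hdiag _).2, if_pos hab, if_neg hba]
  unfold slt at hab
  split_ifs <;> omega

/-! ### Reorganising the sum around the two affected positions -/

lemma sum_range_split_two {n i j : ℕ} (hi : i < n) (hj : j < n) (hij : i ≠ j) (g : ℕ → ℤ) :
    ∑ k ∈ Finset.range n, g k
      = g i + g j + ∑ k ∈ ((Finset.range n).erase i).erase j, g k := by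
  rw [← Finset.add_sum_erase _ g (Finset.mem_range.2 hi),
    ← Finset.add_sum_erase ((Finset.range n).erase i) g
      (Finset.mem_erase.2 ⟨hij.symm, Finset.mem_range.2 hj⟩), add_assoc]

/-- A double sum supported on the rows and columns `i` and `j`. -/
lemma sum_cross {n i j : ℕ} (hi : i < n) (hj : j < n) (hij : i ≠ j) (D : ℕ → ℕ → ℤ)
    (hD : ∀ p q, p ≠ i → p ≠ j → q ≠ i → q ≠ j → D p q = 0) :
    ∑ p ∈ Finset.range n, ∑ q ∈ Finset.range n, D p q
      = (D i i + D i j + D j i + D j j)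
        + ∑ k ∈ ((Finset.range n).erase i).erase j, (D i k + D k i + D j k + D k j) := by
  have hrow : ∀ p ∈ ((Finset.range n).erase i).erase j,
      ∑ q ∈ Finset.range n, D p q = D p i + D p j := by
    intro p hp
    simp only [Finset.mem_erase] at hp
    rw [sum_range_split_two hi hj hij, Finset.sum_eq_zero, add_zero]
    intro q hq
    simp only [Finset.mem_erase] at hq
    exact hD p q hp.2.1 hp.1 hq.2.1 hq.1
  rw [sum_range_split_two hi hj hij, Finset.sum_congr rfl hrow,
    sum_range_split_two hi hj hij (D i), sum_range_split_two hi hj hij (D j)]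
  simp only [Finset.sum_add_distrib]
  ring

/-- Change of length under `(i,-j)` when `w(i) ≺ -w(j)`, for a window given as a function
on 0-based positions. -/
lemma lenSum_sub {n i j : ℕ} (hij : i < j) (hj : j < n) (f f' : ℕ → ℤ)
    (h0 : ∀ k < n, f k ≠ 0)
    (hdist : ∀ p < n, ∀ q < n, p ≠ q → f p ≠ f q ∧ f p ≠ -(f q))
    (hfi : f' i = -(f j)) (hfj : f' j = -(f i)) (hf : ∀ k, k ≠ i → k ≠ j → f' k = f k)
    (hab : slt (f i) (-(f j))) :
    lenSum n f' - lenSum n f = 1 + 2 * (∑ k ∈ Finset.range n,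
      ((if i ≤ k ∧ k < j then betweenInd (f i) (-(f j)) (f k) else 0)
        + (if j < k then betweenInd (f i) (-(f j)) (f k) else 0)
        + (if j < k then betweenInd (f i) (-(f j)) (-(f k)) else 0))
      + (if 0 < f i ∧ 0 < f j then 1 else 0)) := by
  have hi : i < n := hij.trans hj
  unfold lenSum
  simp only [← Finset.sum_sub_distrib]
  rw [sum_cross hi hj hij.ne (fun p q => pairTerm f' p q - pairTerm f p q),
    sum_range_split_two hi hj hij.ne]
  · have hcorner := corner_change hab
    have hrest : ∑ k ∈ ((Finset.range n).erase i).erase j,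
        ((pairTerm f' i k - pairTerm f i k) + (pairTerm f' k i - pairTerm f k i)
          + (pairTerm f' j k - pairTerm f j k) + (pairTerm f' k j - pairTerm f k j))
        = 2 * ∑ k ∈ ((Finset.range n).erase i).erase j,
          ((if i ≤ k ∧ k < j then betweenInd (f i) (-(f j)) (f k) else 0)
            + (if j < k then betweenInd (f i) (-(f j)) (f k) else 0)
            + (if j < k then betweenInd (f i) (-(f j)) (-(f k)) else 0)) := by
      rw [Finset.mul_sum]
      refine Finset.sum_congr rfl fun k hk => ?_
      simp only [Finset.mem_erase, Finset.mem_range] at hk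
      obtain ⟨hkj, hki, hkn⟩ := hk
      have hc0 := h0 k hkn
      have hci := hdist k hkn i hi hki
      have hcj := hdist k hkn j hj hkj
      have e1 := sltInd_sub_right hab hc0 hci.1 hcj.2
      have e2 := sltInd_sub_left hab hc0 hci.1 hcj.2
      have e3 := sltInd_sub_right (c := -(f k)) hab (by omega) (by omega) (by omega)
      have e4 := sltInd_sub_left (c := -(f k)) hab (by omega) (by omega) (by omega)
      have r1 := sltInd_neg_left (f k) (f i)
      have r2 := sltInd_neg_left (f k) (f j)
      have r3 := sltInd_neg_neg (f k) (f i)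
      have r4 := sltInd_neg_neg (f k) (f j)
      have r5 := sltInd_neg_neg (f i) (f k)
      have r6 := sltInd_neg_neg (f j) (f k)
      have r7 := sltInd_neg_right (f k) (f i)
      have r8 := sltInd_neg_right (f k) (f j)
      simp only [pairTerm, hfi, hfj, hf k hki hkj, neg_neg]
      rcases lt_or_gt_of_ne hki with h | h
      -- For `k < i`, `f k` is compared with all of `±f i`, `±f j`, a set which `f'` shares.
      · have h' : k < j := h.trans hij
        simp only [h, h', h.le, h'.le, h.not_gt, h'.not_gt, h.not_ge, h'.not_ge, if_true, if_false,
          false_and]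
        linarith
      · rcases lt_or_gt_of_ne hkj with h' | h'
        · simp only [h, h', h.le, h'.le, h.not_gt, h'.not_gt, h.not_ge, h'.not_ge, if_true,
            if_false, and_self]
          linarith
        · simp only [h, h', h.le, h'.le, h.not_gt, h'.not_gt, h.not_ge, h'.not_ge, if_true,
            if_false, and_false]
          linarith
    rw [hrest]
    simp only [pairTerm, hfi, hfj, neg_neg, hij, hij.le, hij.not_gt, hij.not_ge, le_refl,
      lt_irrefl, if_true, if_false, betweenInd_self, and_false, and_true]
    simp only [mul_add, mul_ite] at *
    linarith
  · intro p q hpi hpj hqi hqj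
    simp only [pairTerm, hf p hpi hpj, hf q hqi hqj, sub_self]

/-! ### Words and windows -/

lemma countP_take_drop (P : ℤ → Bool) (l : List ℤ) : ∀ s t : ℕ,
    ((((l.drop s).take t).countP P : ℕ) : ℤ)
      = ∑ k ∈ Finset.range l.length, if s ≤ k ∧ k < s + t then
          (if P (l.getD k 0) then 1 else 0) else 0 := by
  induction l with
  | nil => simp
  | cons x l ih =>
    intro s t
    rw [List.length_cons, Finset.sum_range_succ']
    rcases s with _ | s
    · rcases t with _ | t
      · simp
      · have := ih 0 t
        simp only [List.drop_zero, zero_le, true_and, zero_add] at this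
        simp [List.countP_cons, this]
    · have := ih s t
      rw [List.drop_succ_cons, this]
      simp only [List.getD_cons_succ, Nat.add_le_add_iff_right, Nat.le_zero, Nat.add_eq_zero_iff,
        one_ne_zero, and_false, false_and, if_false, add_zero]
      refine Finset.sum_congr rfl fun k _ => ?_
      congr 1
      simp only [eq_iff_iff]; omega

lemma Nab_word (a b : ℤ) (l : List ℤ) (i j : ℕ) (hi : 1 ≤ i) (hij : i ≤ j + 1) :
    (Nab a b (word l i j) : ℤ) = ∑ k ∈ Finset.range l.length,
      if i ≤ k + 1 ∧ k < j then betweenInd a b (l.getD k 0) else 0 := by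
  unfold Nab word
  rw [← List.countP_eq_length_filter, countP_take_drop]
  refine Finset.sum_congr rfl fun k _ => ?_
  have h : (i - 1 ≤ k ∧ k < i - 1 + (j + 1 - i)) ↔ (i ≤ k + 1 ∧ k < j) := by omega
  simp only [h, betweenInd, decide_eq_true_eq]

lemma Nab_neg (a b : ℤ) (u : List ℤ) : Nab a b (u.map (fun x => -x)) = Nab (-b) (-a) u := by
  unfold Nab
  rw [← List.countP_eq_length_filter, ← List.countP_eq_length_filter, List.countP_map]
  congr 1
  funext c
  have h1 := slt_neg_neg b (-c)
  have h2 := slt_neg_neg (-c) a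
  rw [neg_neg] at h1 h2
  simp only [Function.comp, h1, h2, and_comm]

lemma window_props {n : ℕ} {w : List ℤ} (hw : w ∈ allWindows n) :
    w.length = n ∧ (∀ k < n, w.getD k 0 ≠ 0) ∧
      ∀ p < n, ∀ q < n, p ≠ q → w.getD p 0 ≠ w.getD q 0 ∧ w.getD p 0 ≠ -(w.getD q 0) := by
  unfold allWindows at hw
  simp only [Finset.mem_image, Finset.mem_univ, true_and] at hw
  obtain ⟨⟨σ, ε⟩, rfl⟩ := hw
  have hget : ∀ (k : ℕ) (hk : k < n), ((List.finRange n).map (fun i =>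
      if ε i then -(((σ i : ℕ) : ℤ) + 1) else ((σ i : ℕ) : ℤ) + 1)).getD k 0
      = if ε ⟨k, hk⟩ then -(((σ ⟨k, hk⟩ : ℕ) : ℤ) + 1) else ((σ ⟨k, hk⟩ : ℕ) : ℤ) + 1 := by
    intro k hk
    rw [List.getD_eq_getElem _ _ (by simpa using hk)]
    simp
  refine ⟨by simp, fun k hk => ?_, fun p hp q hq hpq => ?_⟩
  · simp only [hget k hk]
    split_ifs <;> omega
  · simp only [hget p hp, hget q hq]
    have hne : (σ ⟨p, hp⟩ : ℕ) ≠ (σ ⟨q, hq⟩ : ℕ) := by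
      intro h
      have := σ.injective (Fin.ext h)
      exact hpq (by simpa using this)
    split_ifs <;> omega

lemma applyRefl_neg {w : List ℤ} {i j : ℕ} (h2 : i < j) :
    applyRefl w (i, -(j : ℤ))
      = (w.set (i - 1) (-(w.getD (j - 1) 0))).set (j - 1) (-(w.getD (i - 1) 0)) := by
  unfold applyRefl
  simp [h2.ne]

/-- for `w ∈ B_n`, `i < j`, `a = w(i)`, `b = w(j)`, if
`ℓ(w(i,-j)) > ℓ(w)` then
`ℓ(w(i,-j)) - ℓ(w) - 1 = 2(N_{a,-b}(w[i,j-1], ±w[j+1,n]) + τ_{ab})`. -/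
theorem length_neg_transposition (n : ℕ) (w : List ℤ) (hw : w ∈ allWindows n)
    (i j : ℕ) (h1 : 1 ≤ i) (h2 : i < j) (h3 : j ≤ n)
    (hlen : len w < len (applyRefl w (i, -(j : ℤ)))) :
    (len (applyRefl w (i, -(j : ℤ))) : ℤ) - (len w : ℤ) - 1 =
      2 * ((Nab (w.getD (i - 1) 0) (-(w.getD (j - 1) 0)) (word w i (j - 1)) : ℤ) +
        (Nab (w.getD (i - 1) 0) (-(w.getD (j - 1) 0)) (word w (j + 1) n) : ℤ) +
        (Nab (w.getD (i - 1) 0) (-(w.getD (j - 1) 0)) ((word w (j + 1) n).map (fun x => -x)) : ℤ) +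
        (if 0 < w.getD (i - 1) 0 ∧ 0 < w.getD (j - 1) 0 then 1 else 0)) := by
  obtain ⟨hl, h0, hdist⟩ := window_props hw
  have hj0 : j - 1 < n := by omega
  have hij0 : i - 1 < j - 1 := by omega
  have hi0 : i - 1 < n := by omega
  have hwr := applyRefl_neg (w := w) h2
  set v := applyRefl w (i, -(j : ℤ)) with hv
  have hlv : v.length = n := by rw [hwr]; simp [hl]
  have hvi : v.getD (i - 1) 0 = -(w.getD (j - 1) 0) := by
    rw [hwr, List.getD_eq_getElem _ _ (by simpa [hl] using hi0),
      List.getElem_set_ne (by omega), List.getElem_set_self]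
  have hvj : v.getD (j - 1) 0 = -(w.getD (i - 1) 0) := by
    rw [hwr, List.getD_eq_getElem _ _ (by simpa [hl] using hj0), List.getElem_set_self]
  have hvk : ∀ k, k ≠ i - 1 → k ≠ j - 1 → v.getD k 0 = w.getD k 0 := by
    intro k hki hkj
    rw [hwr, List.getD_eq_getElem?_getD, List.getElem?_set_ne (Ne.symm hkj),
      List.getElem?_set_ne (Ne.symm hki), ← List.getD_eq_getElem?_getD]
  have hLw := len_eq_lenSum w
  have hLv := len_eq_lenSum v
  rw [hl] at hLw
  rw [hlv] at hLv
  by_cases hab : slt (w.getD (i - 1) 0) (-(w.getD (j - 1) 0))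
  · have key := lenSum_sub hij0 hj0 (fun k => w.getD k 0) (fun k => v.getD k 0)
      h0 hdist hvi hvj hvk hab
    rw [Nab_neg, Nab_word _ _ _ _ _ h1 (by omega), Nab_word _ _ _ _ _ (by omega) (by omega),
      Nab_word _ _ _ _ _ (by omega) (by omega), hl, hLw, hLv, key]
    have hsum : ∀ x y : ℤ, x = y → 1 + 2 * (x + (if 0 < w.getD (i - 1) 0 ∧ 0 < w.getD (j - 1) 0
        then 1 else 0)) - 1 = 2 * (y + (if 0 < w.getD (i - 1) 0 ∧ 0 < w.getD (j - 1) 0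
        then 1 else 0)) := by
      rintro x y rfl; ring
    refine hsum _ _ ?_
    rw [← Finset.sum_add_distrib, ← Finset.sum_add_distrib]
    refine Finset.sum_congr rfl fun k hk => ?_
    have hk := Finset.mem_range.1 hk
    have c1 : (i - 1 ≤ k ∧ k < j - 1) ↔ (i ≤ k + 1 ∧ k < j - 1) := by omega
    have c2 : j - 1 < k ↔ (j + 1 ≤ k + 1 ∧ k < n) := by omega
    have hneg := betweenInd_neg (w.getD (i - 1) 0) (-(w.getD (j - 1) 0)) (w.getD k 0)
    simp only [c1, c2, hneg]
  · -- If `w(i) ⊀ -w(j)`, then `-w(j) ≺ w(i)`, and `w` arises from `v = w(i,-j)` by the same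
    -- reflection, now with the hypothesis `v(i) ≺ -v(j)`; so the length drops from `w` to `v`.
    exfalso
    have hd := hdist (i - 1) hi0 (j - 1) hj0 hij0.ne
    have ha0 := h0 (i - 1) hi0
    have hb0 := h0 (j - 1) hj0
    have hba : slt (v.getD (i - 1) 0) (-(v.getD (j - 1) 0)) := by
      rw [hvi, hvj]
      unfold slt at *
      omega
    have habs : ∀ k, k < n → ∃ m < n, (v.getD k 0 = w.getD m 0 ∨ v.getD k 0 = -(w.getD m 0)) ∧
        ((k = i - 1 ∧ m = j - 1) ∨ (k = j - 1 ∧ m = i - 1) ∨ (k ≠ i - 1 ∧ k ≠ j - 1 ∧ m = k)) := by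
      intro k hk
      by_cases hki : k = i - 1
      · exact ⟨j - 1, hj0, Or.inr (hki ▸ hvi), Or.inl ⟨hki, rfl⟩⟩
      · by_cases hkj : k = j - 1
        · exact ⟨i - 1, hi0, Or.inr (hkj ▸ hvj), Or.inr (Or.inl ⟨hkj, rfl⟩)⟩
        · exact ⟨k, hk, Or.inl (hvk k hki hkj), Or.inr (Or.inr ⟨hki, hkj, rfl⟩)⟩
    have key := lenSum_sub hij0 hj0 (fun k => v.getD k 0) (fun k => w.getD k 0)
      (fun k hk => by
        obtain ⟨m, hm, hvm, -⟩ := habs k hk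
        have := h0 m hm
        omega)
      (fun p hp q hq hpq => by
        obtain ⟨m, hm, hvm, hpm⟩ := habs p hp
        obtain ⟨m', hm', hvm', hqm⟩ := habs q hq
        have := hdist m hm m' hm' (by omega)
        omega)
      (by simp only [hvj, neg_neg]) (by simp only [hvi, neg_neg])
      (fun k hki hkj => (hvk k hki hkj).symm) hba
    have hnonneg : ∀ a b c : ℤ, 0 ≤ betweenInd a b c := by
      intro a b c; unfold betweenInd; split_ifs <;> norm_num
    have hpos : (0 : ℤ) < lenSum n (fun k => w.getD k 0) - lenSum n (fun k => v.getD k 0) := by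
      rw [key]
      refine add_pos_of_pos_of_nonneg one_pos (mul_nonneg two_pos.le (add_nonneg
        (Finset.sum_nonneg fun k _ => add_nonneg (add_nonneg ?_ ?_) ?_) ?_))
      all_goals split_ifs <;> first | exact hnonneg _ _ _ | norm_num
    omega

end HL
end

section
/- Let w be in B_n, a := w(1), 1 ≤ p ≤ n, p < q ≤ s ≤ n, c := w(q), b := -c, and suppose a ≺ b. Let Delta(-s) denote the suffix of Delta beginning with (1,-s). Then, in Z[t], the sum over all increasing-admissible subsequences T of Delta(-s) with (wT)(1) = b of t^{(l(wT) - l(w) - |T|)/2} (1-t)^{|T|} equals t^{N_{ab}(w[2,q-1], w[q+1,s], ±w[s+1,n]) + tau_{ac}} (1-t). -/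
/-!
The sum is computed by a recursion along `Δ(-s) = ((1,-s),(1,-(s-1)),...,(1,-(p+1)))`.

Write `w = a u d v` with `d = w(j)`. Then `ℓ(w (1,-j)) > ℓ(w)` iff `a ≺ -d`, and in that case
`ℓ(w (1,-j)) - ℓ(w) - 1` is twice `N_{a,-d}(u, ±v) + τ_{ad}` (`len_refl`, `len_refl_lt_iff`): the
length is a sum over pairs of positions, and only those meeting `{1, j}` change. Splitting the
subsequences by whether they use the first reflection gives (`chainSum_succ`), for `d = w(s)`,

  `S(w, s) = S(w, s-1) + [a ≺ -d] t^{N_{a,-d}(u, ±v) + τ_{ad}} (1-t) S(w (1,-s), s-1)`.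

The first entry strictly increases along a chain. Hence `S = 0` if `b ≺ w(1)`, and `S = 1` if
`w(1) = b`; moreover `S(w, s) = 0` for `s < q` because the entry `-b` in position `q` is not moved.
This gives the formula for `s = q`. For `s > q` one inducts on `s` (`chainSum_main`). Unless
`a ≺ -d ≺ b` the second term vanishes and the two exponents for `s` and `s - 1` agree. If
`a ≺ -d ≺ b`, the first term is `t^{E+1} (1-t)` and the second is `t^E (1-t)²`, where `E` is the
claimed exponent (`Nab_split`, `exponent_identity`); they add up to `t^E (1-t)`.
-/

open scoped BigOperators

namespace HL

open Polynomial

/-! ### The length function and its change under `(1,-j)` -/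

/-- The indicator of a proposition, as a natural number. -/
def ind (P : Prop) [Decidable P] : ℕ := if P then 1 else 0

/-- The contribution of a pair of positions `k < l` with entries `x = w(k)`, `y = w(l)` to the
length `ℓ = ℓ₊ + ℓ₋`. -/
def pairLen (x y : ℤ) : ℕ := ind (slt y x) + ind (slt (-y) x)

/-- The length function by recursion on the window; the diagonal pairs `(k,k)` of `ℓ₋` contribute
`1` exactly for negative entries. -/
def recLen : List ℤ → ℕ
  | [] => 0
  | x :: t => ind (x < 0) + (t.map (pairLen x)).sum + recLen t

theorem sum_range_getD (f : ℤ → ℕ) (t : List ℤ) :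
    ∑ l ∈ Finset.range t.length, f (t.getD l 0) = (t.map f).sum := by
  induction t with
  | nil => simp
  | cons x t ih =>
    rw [List.length_cons, Finset.sum_range_succ']
    simp only [List.getD_cons_succ, List.getD_cons_zero, ih, List.map_cons, List.sum_cons]
    omega

theorem slt_neg_self_iff (x : ℤ) : slt (-x) x ↔ x < 0 := by
  unfold slt; omega

theorem lplus_cons (x : ℤ) (t : List ℤ) :
    lplus (x :: t) = (t.map fun y => ind (slt y x)).sum + lplus t := by
  unfold lplus
  rw [Finset.card_filter, Finset.card_filter, Finset.sum_product, Finset.sum_product,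
    List.length_cons, Finset.sum_range_succ']
  simp only [Finset.sum_range_succ' _ t.length, List.getD_cons_succ, List.getD_cons_zero]
  simp only [Nat.add_lt_add_iff_right, Nat.not_lt_zero, Nat.lt_irrefl, false_and, if_false,
    Nat.zero_lt_succ, true_and, add_zero]
  rw [← sum_range_getD (fun y => ind (slt y x))]
  simp only [ind]
  rw [add_comm]

theorem lminus_cons (x : ℤ) (t : List ℤ) :
    lminus (x :: t) = ind (x < 0) + (t.map fun y => ind (slt (-y) x)).sum + lminus t := by
  unfold lminus
  rw [Finset.card_filter, Finset.card_filter, Finset.sum_product, Finset.sum_product,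
    List.length_cons, Finset.sum_range_succ']
  simp only [Finset.sum_range_succ' _ t.length, List.getD_cons_succ, List.getD_cons_zero]
  simp only [Nat.add_le_add_iff_right, Nat.le_zero_eq, Nat.succ_ne_zero, le_refl, false_and,
    if_false, Nat.zero_le, true_and, add_zero, slt_neg_self_iff]
  rw [← sum_range_getD (fun y => ind (slt (-y) x))]
  simp only [ind]
  omega

theorem len_eq_recLen (l : List ℤ) : len l = recLen l := by
  induction l with
  | nil => rfl
  | cons x t ih =>
    unfold len at ih ⊢
    have : (t.map (pairLen x)).sum =
        (t.map fun y => ind (slt y x)).sum + (t.map fun y => ind (slt (-y) x)).sum := by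
      rw [← List.sum_map_add]; rfl
    rw [lplus_cons, lminus_cons, recLen, this]
    omega

theorem recLen_insert (u v : List ℤ) (d : ℤ) :
    recLen (u ++ d :: v) = recLen (u ++ v) + ind (d < 0) +
      (u.map fun x => pairLen x d).sum + (v.map (pairLen d)).sum := by
  induction u with
  | nil => simp [recLen]; omega
  | cons x u ih =>
    simp only [List.cons_append, recLen, ih, List.map_append, List.map_cons, List.sum_append,
      List.sum_cons]
    omega

theorem Nab_eq_sum (a b : ℤ) (u : List ℤ) :
    Nab a b u = (u.map fun x => ind (slt a x ∧ slt x b)).sum := by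
  induction u with
  | nil => rfl
  | cons x u ih =>
    rw [List.map_cons, List.sum_cons, ← ih]
    unfold Nab ind
    by_cases h : slt a x ∧ slt x b
    · rw [List.filter_cons_of_pos (by simpa using h), List.length_cons, if_pos h, add_comm]
    · rw [List.filter_cons_of_neg (by simpa using h), if_neg h, zero_add]

theorem Nab_append (a b : ℤ) (u v : List ℤ) : Nab a b (u ++ v) = Nab a b u + Nab a b v := by
  simp [Nab]

theorem Nab_cons (a b x : ℤ) (u : List ℤ) :
    Nab a b (x :: u) = ind (slt a x ∧ slt x b) + Nab a b u := by
  simp [Nab_eq_sum]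

/-- Effect of `(1,-j)` on the pairs joining the positions `1` and `j`, with entries `a` and `d`, to
a position between them with entry `x`. -/
theorem change_mid (a d x : ℤ) (ha : a ≠ 0) (hd : d ≠ 0) (hx : x ≠ 0) (h : slt a (-d))
    (h1 : a ≠ x ∧ a ≠ -x) (h2 : x ≠ d ∧ x ≠ -d) :
    pairLen (-d) x + pairLen x (-a) =
      pairLen a x + pairLen x d + 2 * ind (slt a x ∧ slt x (-d)) := by
  rcases lt_or_gt_of_ne ha with ha | ha <;> rcases lt_or_gt_of_ne hd with hd | hd <;>
  rcases lt_or_gt_of_ne hx with hx | hx <;>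
  simp only [pairLen, ind, slt] at * <;> grind

/-- Effect of `(1,-j)` on the pairs joining the positions `1` and `j`, with entries `a` and `d`, to
a position to the right of `j` with entry `x`. -/
theorem change_right (a d x : ℤ) (ha : a ≠ 0) (hd : d ≠ 0) (hx : x ≠ 0) (h : slt a (-d))
    (h1 : a ≠ x ∧ a ≠ -x) (h2 : d ≠ x ∧ d ≠ -x) :
    pairLen (-d) x + pairLen (-a) x =
      pairLen a x + pairLen d x +
        2 * (ind (slt a x ∧ slt x (-d)) + ind (slt a (-x) ∧ slt (-x) (-d))) := by
  rcases lt_or_gt_of_ne ha with ha | ha <;> rcases lt_or_gt_of_ne hd with hd | hd <;>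
  rcases lt_or_gt_of_ne hx with hx | hx <;>
  simp only [pairLen, ind, slt] at * <;> grind

/-- Effect of `(1,-j)` on the pairs supported on the positions `1` and `j`, with entries `a` and
`d`. -/
theorem change_self (a d : ℤ) (ha : a ≠ 0) (hd : d ≠ 0) (h : slt a (-d)) :
    ind (-d < 0) + ind (-a < 0) + pairLen (-d) (-a) =
      ind (a < 0) + ind (d < 0) + pairLen a d + 2 * ind (0 < a ∧ 0 < d) + 1 := by
  rcases lt_or_gt_of_ne ha with ha | ha <;> rcases lt_or_gt_of_ne hd with hd | hd <;>
  simp only [pairLen, ind, slt] at * <;> grind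

/-- Nonzero entries with pairwise distinct absolute values: the only property of windows of signed
permutations that matters here. -/
def Signed (w : List ℤ) : Prop :=
  (∀ x ∈ w, x ≠ 0) ∧ w.Pairwise (fun x y => x ≠ y ∧ x ≠ -y)

/-- `(ℓ(w (1,-j)) - ℓ(w) - 1) / 2` for `w = a u d v` with `d` in position `j` and `a ≺ -d`, see
`len_refl`. -/
def gain (a d : ℤ) (u v : List ℤ) : ℕ :=
  Nab a (-d) u + Nab a (-d) v + Nab a (-d) (v.map fun x => -x) + ind (0 < a ∧ 0 < d)

theorem Signed.refl {a d : ℤ} {u v : List ℤ} (h : Signed (a :: u ++ d :: v)) :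
    Signed (-d :: u ++ -a :: v) := by
  simp only [Signed, List.cons_append, List.pairwise_cons, List.pairwise_append, List.mem_append,
    List.mem_cons] at h ⊢
  grind

theorem sum_change_mid (a d : ℤ) (u : List ℤ) (ha : a ≠ 0) (hd : d ≠ 0) (h : slt a (-d))
    (hu : ∀ x ∈ u, x ≠ 0 ∧ (a ≠ x ∧ a ≠ -x) ∧ (x ≠ d ∧ x ≠ -d)) :
    (u.map (pairLen (-d))).sum + (u.map fun x => pairLen x (-a)).sum =
      (u.map (pairLen a)).sum + (u.map fun x => pairLen x d).sum + 2 * Nab a (-d) u := by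
  induction u with
  | nil => rfl
  | cons x u ih =>
    have hx := hu x (by simp)
    have := change_mid a d x ha hd hx.1 h hx.2.1 hx.2.2
    have := ih fun y hy => hu y (by simp [hy])
    simp only [List.map_cons, List.sum_cons, Nab_cons]
    omega

theorem sum_change_right (a d : ℤ) (v : List ℤ) (ha : a ≠ 0) (hd : d ≠ 0) (h : slt a (-d))
    (hv : ∀ x ∈ v, x ≠ 0 ∧ (a ≠ x ∧ a ≠ -x) ∧ (d ≠ x ∧ d ≠ -x)) :
    (v.map (pairLen (-d))).sum + (v.map (pairLen (-a))).sum =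
      (v.map (pairLen a)).sum + (v.map (pairLen d)).sum +
        2 * (Nab a (-d) v + Nab a (-d) (v.map fun x => -x)) := by
  induction v with
  | nil => rfl
  | cons x v ih =>
    have hx := hv x (by simp)
    have := change_right a d x ha hd hx.1 h hx.2.1 hx.2.2
    have := ih fun y hy => hv y (by simp [hy])
    simp only [List.map_cons, List.sum_cons, Nab_cons]
    omega

theorem len_refl {a d : ℤ} {u v : List ℤ} (h : Signed (a :: u ++ d :: v)) (had : slt a (-d)) :
    len (-d :: u ++ -a :: v) = len (a :: u ++ d :: v) + 2 * gain a d u v + 1 := by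
  simp only [Signed, List.cons_append, List.pairwise_cons, List.pairwise_append, List.mem_append,
    List.mem_cons] at h
  have ha : a ≠ 0 := by grind
  have hd : d ≠ 0 := by grind
  have h1 := sum_change_mid a d u ha hd had (by grind)
  have h2 := sum_change_right a d v ha hd had (by grind)
  have h3 := change_self a d ha hd had
  simp only [len_eq_recLen, List.cons_append, recLen, recLen_insert, List.map_append,
    List.map_cons, List.sum_append, List.sum_cons, gain]
  omega

theorem slt_or {x y : ℤ} (hx : x ≠ 0) (hy : y ≠ 0) (h : x ≠ y) : slt x y ∨ slt y x := by
  unfold slt; omega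

/-- The decreasing case follows from `len_refl` applied to `w (1,-j)`, since `(1,-j)` is an
involution. -/
theorem len_refl_lt_iff {a d : ℤ} {u v : List ℤ} (h : Signed (a :: u ++ d :: v)) :
    len (a :: u ++ d :: v) < len (-d :: u ++ -a :: v) ↔ slt a (-d) := by
  constructor
  · intro hlt
    by_contra hn
    have hh := h
    simp only [Signed, List.cons_append, List.pairwise_cons, List.pairwise_append,
      List.mem_append, List.mem_cons] at hh
    have ha : a ≠ 0 := by grind
    have hd : -d ≠ 0 := by grind
    have hs := (slt_or ha hd (by grind)).resolve_left hn
    have := len_refl h.refl (by simpa using hs)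
    simp only [neg_neg] at this
    omega
  · intro hs
    have := len_refl h hs
    omega

theorem applyRefl_neg_s16 (a d : ℤ) (u v : List ℤ) (j : ℕ) (hj : j = u.length + 2) :
    applyRefl (a :: u ++ d :: v) (1, -(j : ℤ)) = -d :: u ++ -a :: v := by
  subst hj
  have h1 : ¬ (0 : ℤ) < -((u.length + 2 : ℕ) : ℤ) := by omega
  have h2 : (- -((u.length + 2 : ℕ) : ℤ)).toNat = u.length + 2 := by omega
  simp only [applyRefl, h1, if_false, h2]
  rw [if_neg (by omega)]
  simp

/-! ### Sums over subsequences of a chain -/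

theorem sort_map_succ (J : Finset ℕ) :
    (J.map ⟨Nat.succ, Nat.succ_injective⟩).sort (· ≤ ·) = (J.sort (· ≤ ·)).map Nat.succ := by
  symm
  exact StrictMonoOn.map_finsetSort ⟨Nat.succ, Nat.succ_injective⟩ J
    fun _ _ _ _ h => Nat.succ_lt_succ h

theorem selChain_map_succ (t : ℕ × ℤ) (Γ : List (ℕ × ℤ)) (J : Finset ℕ) :
    selChain (t :: Γ) (J.map ⟨Nat.succ, Nat.succ_injective⟩) = selChain Γ J := by
  simp [selChain, sort_map_succ, Function.comp_def]

theorem selChain_insert_zero (t : ℕ × ℤ) (Γ : List (ℕ × ℤ)) (J : Finset ℕ) :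
    selChain (t :: Γ) (insert 0 (J.map ⟨Nat.succ, Nat.succ_injective⟩)) = t :: selChain Γ J := by
  rw [selChain, Finset.sort_insert _ (by simp) (by simp), List.map_cons]
  exact congrArg (t :: ·) (selChain_map_succ t Γ J)

theorem length_selChain (Γ : List (ℕ × ℤ)) (J : Finset ℕ) : (selChain Γ J).length = J.card := by
  simp [selChain]

/-- Subsequences of `t :: Γ` are split according to whether they contain the first reflection. -/
theorem sum_selChain_cons {M : Type*} [AddCommMonoid M] (t : ℕ × ℤ) (Γ : List (ℕ × ℤ))
    (F : List (ℕ × ℤ) → M) :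
    ∑ J ∈ (Finset.range (t :: Γ).length).powerset, F (selChain (t :: Γ) J) =
      ∑ J ∈ (Finset.range Γ.length).powerset, F (selChain Γ J) +
        ∑ J ∈ (Finset.range Γ.length).powerset, F (t :: selChain Γ J) := by
  have hr : Finset.range (t :: Γ).length =
      insert 0 ((Finset.range Γ.length).map ⟨Nat.succ, Nat.succ_injective⟩) := by
    rw [List.length_cons, Finset.range_add_one']
  have key : ∀ f : Finset ℕ → M, 
      ∑ J ∈ ((Finset.range Γ.length).map ⟨Nat.succ, Nat.succ_injective⟩).powerset, f J =
      ∑ J ∈ (Finset.range Γ.length).powerset, f (J.map ⟨Nat.succ, Nat.succ_injective⟩) := by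
    intro f
    symm
    refine Finset.sum_bij (fun J _ => J.map ⟨Nat.succ, Nat.succ_injective⟩) ?_ ?_ ?_ ?_
    · intro J hJ
      simpa using hJ
    · intro J _ J' _ h
      exact Finset.map_injective _ h
    · intro J hJ
      obtain ⟨J', h, rfl⟩ := Finset.subset_map_iff.1 (Finset.mem_powerset.1 hJ)
      exact ⟨J', Finset.mem_powerset.2 h, rfl⟩
    · intro J _
      rfl
  rw [hr, Finset.sum_powerset_insert (by simp), key, key]
  simp only [selChain_map_succ, selChain_insert_zero]

/-- The summand of the subsequence `T`: zero unless `T` is increasing-admissible with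
`(wT)(1) = b`. -/
noncomputable def wt (b : ℤ) (w : List ℤ) (T : List (ℕ × ℤ)) : ℤ[X] :=
  if incChain w T = true ∧ (applyAll w T).getD 0 0 = b then
    X ^ ((len (applyAll w T) - len w - T.length) / 2) * (1 - X) ^ T.length
  else 0

/-- The sum of `t^{(ℓ(wT)-ℓ(w)-|T|)/2} (1-t)^{|T|}` over the increasing-admissible subsequences `T`
of `Γ` with `(wT)(1) = b`. -/
noncomputable def chainSum (b : ℤ) (w : List ℤ) (Γ : List (ℕ × ℤ)) : ℤ[X] :=
  ∑ J ∈ (Finset.range Γ.length).powerset, wt b w (selChain Γ J)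

/-- This keeps the truncated subtractions in the exponents of `wt` honest. -/
theorem len_le_of_incChain (w : List ℤ) (T : List (ℕ × ℤ)) (h : incChain w T = true) :
    len w + T.length ≤ len (applyAll w T) := by
  induction T generalizing w with
  | nil => simp [applyAll]
  | cons t T ih =>
    simp only [incChain, Bool.and_eq_true, decide_eq_true_eq] at h
    have := ih _ h.2
    simp only [applyAll, List.foldl_cons, List.length_cons] at this ⊢
    omega

theorem wt_cons {b : ℤ} {w : List ℤ} {t : ℕ × ℤ} {e : ℕ}
    (he : len (applyRefl w t) = len w + 2 * e + 1) (T : List (ℕ × ℤ)) :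
    wt b w (t :: T) = X ^ e * (1 - X) * wt b (applyRefl w t) T := by
  have hlt : len w < len (applyRefl w t) := by omega
  have happ : applyAll w (t :: T) = applyAll (applyRefl w t) T := rfl
  simp only [wt, incChain, hlt, decide_true, Bool.true_and, happ, List.length_cons]
  split_ifs with h
  · have := len_le_of_incChain _ _ h.1
    rw [show (len (applyAll (applyRefl w t) T) - len w - (T.length + 1)) / 2 =
      e + (len (applyAll (applyRefl w t) T) - len (applyRefl w t) - T.length) / 2 by omega]
    ring
  · rw [mul_zero]

theorem wt_cons_of_not {b : ℤ} {w : List ℤ} {t : ℕ × ℤ}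
    (h : ¬ len w < len (applyRefl w t)) (T : List (ℕ × ℤ)) : wt b w (t :: T) = 0 := by
  simp [wt, incChain, h]

theorem chainSum_nil (b : ℤ) (w : List ℤ) : chainSum b w [] = if w.getD 0 0 = b then 1 else 0 := by
  simp [chainSum, wt, selChain, incChain, applyAll]

theorem delta_self (p : ℕ) : deltaSuffixNeg p p = [] := by simp [deltaSuffixNeg]

theorem delta_succ (p s : ℕ) (h : p ≤ s) :
    deltaSuffixNeg p (s + 1) = (1, -((s + 1 : ℕ) : ℤ)) :: deltaSuffixNeg p s := by
  rw [deltaSuffixNeg, Nat.succ_sub h, List.range_succ_eq_map]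
  simp [deltaSuffixNeg, Function.comp_def]

/-- The recursion for the sum over `Δ(-(s+1))`, whose first reflection `(1,-(s+1))` is either
skipped or applied. -/
theorem chainSum_succ (b : ℤ) {a d : ℤ} {u v : List ℤ} (h : Signed (a :: u ++ d :: v)) (p s : ℕ)
    (hps : p ≤ s) (hs : s = u.length + 1) :
    chainSum b (a :: u ++ d :: v) (deltaSuffixNeg p (s + 1)) =
      chainSum b (a :: u ++ d :: v) (deltaSuffixNeg p s) +
        if slt a (-d) then
          X ^ gain a d u v * (1 - X) * chainSum b (-d :: u ++ -a :: v) (deltaSuffixNeg p s)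
        else 0 := by
  have happ := applyRefl_neg_s16 a d u v (s + 1) (by omega)
  rw [delta_succ p s hps, chainSum, sum_selChain_cons, chainSum]
  congr 1
  split_ifs with had
  · have hlen := len_refl h had
    rw [← happ] at hlen
    simp only [wt_cons hlen, chainSum, Finset.mul_sum, happ]
  · refine Finset.sum_eq_zero fun J _ => wt_cons_of_not ?_ _
    rw [happ, len_refl_lt_iff h]
    exact had

/-! ### The recursion along `Δ(-s)` -/

theorem slt_irrefl (a : ℤ) : ¬ slt a a := by unfold slt; omega

theorem slt_trans {a b c : ℤ} (h1 : slt a b) (h2 : slt b c) : slt a c := by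
  unfold slt at *; omega

theorem exists_split (w : List ℤ) (s : ℕ) (h1 : 1 ≤ s) (h : s < w.length) :
    ∃ a u d v, w = a :: u ++ d :: v ∧ s = u.length + 1 := by
  obtain ⟨s, rfl⟩ : ∃ k, s = k + 1 := ⟨s - 1, by omega⟩
  cases w with
  | nil => simp at h
  | cons a w =>
    simp only [List.length_cons] at h
    have hs : s < w.length := by omega
    refine ⟨a, w.take s, w[s], w.drop (s + 1), ?_, ?_⟩
    · simp
    · simp; omega

/-- The first entry only grows along an increasing chain, so a smaller `b` is never reached. -/
theorem chainSum_eq_zero_of_slt (b : ℤ) (p s : ℕ) (hp : 1 ≤ p) (hps : p ≤ s) (w : List ℤ)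
    (hw : Signed w) (hs : s ≤ w.length) (hb : slt b (w.getD 0 0)) :
    chainSum b w (deltaSuffixNeg p s) = 0 := by
  induction s, hps using Nat.le_induction generalizing w with
  | base =>
    rw [delta_self, chainSum_nil, if_neg]
    rintro rfl
    exact slt_irrefl _ hb
  | succ s hps ih =>
    obtain ⟨a, u, d, v, rfl, hu⟩ := exists_split w s (by omega) (by omega)
    rw [chainSum_succ b hw p s hps hu, ih _ hw (by omega) hb, zero_add]
    split_ifs with had
    · rw [ih _ hw.refl (by simp; omega) (by simpa using slt_trans (by simpa using hb) had), mul_zero]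
    · rfl

/-- If the first entry already is `b`, only the empty subsequence contributes. -/
theorem chainSum_eq_one (b : ℤ) (p s : ℕ) (hp : 1 ≤ p) (hps : p ≤ s) (w : List ℤ)
    (hw : Signed w) (hs : s ≤ w.length) (hb : w.getD 0 0 = b) :
    chainSum b w (deltaSuffixNeg p s) = 1 := by
  induction s, hps using Nat.le_induction with
  | base => rw [delta_self, chainSum_nil, if_pos hb]
  | succ s hps ih =>
    obtain ⟨a, u, d, v, rfl, hu⟩ := exists_split w s (by omega) (by omega)
    obtain rfl : a = b := by simpa using hb
    rw [chainSum_succ a hw p s hps hu, ih (by omega)]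
    split_ifs with had
    · rw [chainSum_eq_zero_of_slt a p s hp hps _ hw.refl (by simp at hs ⊢; omega) (by simpa using had),
        mul_zero, add_zero]
    · rw [add_zero]

/-- The entry `c` in position `q` is untouched by `Δ(-s)` for `s < q`, so the first entry can never
become `-c`. -/
theorem chainSum_eq_zero_of_le (p s : ℕ) (hp : 1 ≤ p) (hps : p ≤ s) (x c : ℤ) (u v : List ℤ)
    (hw : Signed (x :: u ++ c :: v)) (hs : s ≤ u.length + 1) :
    chainSum (-c) (x :: u ++ c :: v) (deltaSuffixNeg p s) = 0 := by
  induction s, hps using Nat.le_induction generalizing x u with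
  | base =>
    rw [delta_self, chainSum_nil, if_neg]
    simp only [Signed, List.cons_append, List.pairwise_cons, List.mem_append, List.mem_cons] at hw
    simpa using (hw.2.1 c (by simp)).2
  | succ s hps ih =>
    obtain ⟨a, u', d, v', h, hu⟩ := exists_split (x :: u) s (by omega) (by simp; omega)
    obtain ⟨rfl, rfl⟩ : x = a ∧ u = u' ++ d :: v' := by simpa using h
    have e1 : ∀ y z : ℤ, y :: (u' ++ z :: v') ++ c :: v = y :: u' ++ z :: (v' ++ c :: v) := by simp
    have hw' := hw
    rw [e1] at hw'
    have i1 := ih x (u' ++ d :: v') hw (by omega)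
    have i2 := ih (-d) (u' ++ -x :: v') (by rw [e1]; exact hw'.refl) (by simp at hs ⊢; omega)
    rw [e1] at i1 i2 ⊢
    rw [chainSum_succ _ hw' p s hps hu, i1, i2]
    simp

/-- The identity between the exponents which makes the two terms of the recursion add up; here
`a = w(1)`, `d = w(s)`, `c = w(q)`. -/
theorem exponent_identity {a c d : ℤ} (ha : a ≠ 0) (hc : c ≠ 0) (hd : d ≠ 0)
    (hac : a ≠ c ∧ a ≠ -c) (hcd : c ≠ d ∧ c ≠ -d)
    (h1 : slt a (-d)) (h2 : slt (-d) (-c)) :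
    ind (slt a c ∧ slt c (-d)) + ind (slt (-d) (-a) ∧ slt (-a) (-c)) + ind (0 < a ∧ 0 < d) +
      ind (0 < -d ∧ 0 < c) = ind (slt a d ∧ slt d (-c)) + ind (0 < a ∧ 0 < c) := by
  rcases lt_or_gt_of_ne ha with ha | ha <;> rcases lt_or_gt_of_ne hd with hd | hd <;>
  rcases lt_or_gt_of_ne hc with hc | hc <;>
  simp only [ind, slt] at * <;> grind

theorem Nab_split {a m b : ℤ} (h1 : slt a m) (h2 : slt m b) (u : List ℤ) (hu : ∀ x ∈ u, x ≠ m)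
    (h0 : ∀ x ∈ u, x ≠ 0) :
    Nab a m u + Nab m b u = Nab a b u := by
  induction u with
  | nil => rfl
  | cons x u ih =>
    have := ih (fun y hy => hu y (by simp [hy])) (fun y hy => h0 y (by simp [hy]))
    have hx := hu x (by simp)
    have hx0 := h0 x (by simp)
    have : ind (slt a x ∧ slt x m) + ind (slt m x ∧ slt x b) = ind (slt a x ∧ slt x b) := by
      have t1 : slt x m → slt x b := fun h => slt_trans h h2
      have t2 : slt m x → slt a x := fun h => slt_trans h1 h
      have t3 : slt x m → slt m x → False := fun h h' => slt_irrefl _ (slt_trans h h')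
      have t4 := slt_or hx0 (y := m) (by unfold slt at h1; omega) hx
      unfold ind; grind
    simp only [Nab_cons]
    omega

theorem pow_combine {e₁ e₂ e₃ e₄ : ℕ} (E : ℕ) (h₁ : e₁ = E + 1) (h₂ : e₂ + e₃ = E)
    (h₄ : e₄ = E) :
    (X : ℤ[X]) ^ e₁ * (1 - X) + X ^ e₂ * (1 - X) * (X ^ e₃ * (1 - X)) = X ^ e₄ * (1 - X) := by
  subst h₁ h₄ h₂
  ring

/-- The formula for `w = a u₁ c u₂ v`, where `c` stands in position `q` and `u₂ = w[q+1,s]`. -/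
theorem chainSum_main (p : ℕ) (hp : 1 ≤ p) (u2 : List ℤ) : ∀ (a c : ℤ) (u1 v : List ℤ),
    Signed (a :: u1 ++ c :: (u2 ++ v)) → slt a (-c) → p ≤ u1.length + 1 →
    chainSum (-c) (a :: u1 ++ c :: (u2 ++ v)) (deltaSuffixNeg p (u1.length + 2 + u2.length)) =
      X ^ (Nab a (-c) u1 + Nab a (-c) u2 + Nab a (-c) v + Nab a (-c) (v.map fun x => -x) +
        ind (0 < a ∧ 0 < c)) * (1 - X) := by
  induction u2 using List.reverseRecOn with
  | nil =>
    intro a c u1 v hw hac hpu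
    simp only [List.nil_append, List.length_nil, add_zero] at hw ⊢
    rw [chainSum_succ _ hw p (u1.length + 1) hpu rfl, if_pos hac,
      chainSum_eq_zero_of_le p _ hp hpu a c u1 v hw le_rfl,
      chainSum_eq_one (-c) p _ hp hpu _ hw.refl (by simp) (by simp)]
    simp [gain, Nab]
  | append_singleton u2 d ih =>
    intro a c u1 v hw hac hpu
    have e1 : ∀ y z : ℤ, y :: u1 ++ c :: (u2 ++ z :: v) = y :: (u1 ++ c :: u2) ++ z :: v := by simp
    have e2 : u2 ++ [d] ++ v = u2 ++ d :: v := by simp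
    rw [e2] at hw ⊢
    have hw' := hw
    rw [e1] at hw'
    have hh := hw
    simp only [Signed, List.cons_append, List.pairwise_cons, List.pairwise_append,
      List.mem_append, List.mem_cons] at hh
    have i1 := ih a c u1 (d :: v) hw hac hpu
    have hl : u1.length + 2 + (u2 ++ [d]).length = (u1.length + 2 + u2.length) + 1 := by
      simp; omega
    rw [hl, e1, chainSum_succ _ hw' p _ (by omega) (by simp; omega), ← e1, i1]
    simp only [Nab_append, Nab_cons, List.map_cons]
    have hnil : Nab a (-c) [] = 0 := rfl
    by_cases had : slt a (-d)
    · rw [if_pos had]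
      by_cases hdc : slt (-d) (-c)
      · have i2 := ih (-d) c u1 (-a :: v) (by rw [e1]; exact hw'.refl) hdc hpu
        rw [← e1, i2]
        have x1 := exponent_identity (a := a) (c := c) (d := d) (by grind) (by grind) (by grind)
          (by grind) (by grind) had hdc
        have s1 := Nab_split had hdc u1 (by grind) (by grind)
        have s2 := Nab_split had hdc u2 (by grind) (by grind)
        have s3 := Nab_split had hdc v (by grind) (by grind)
        have s4 := Nab_split had hdc (v.map fun x => -x)
          (by simp only [List.mem_map]; grind) (by simp only [List.mem_map]; grind)
        have z1 : ind (slt a (-d) ∧ slt (-d) (-c)) = 1 := by simp [ind, had, hdc]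
        have z2 : ind (slt (-d) a ∧ slt a (-c)) = 0 := by
          rw [ind, if_neg]
          exact fun h => slt_irrefl _ (slt_trans had h.1)
        -- the exponent on the right-hand side
        set E := Nab a (-c) u1 + Nab a (-c) u2 + Nab a (-c) v + Nab a (-c) (v.map fun x => -x) +
          ind (slt a d ∧ slt d (-c)) + ind (0 < a ∧ 0 < c) with hE
        simp only [Nab_append, Nab_cons, List.map_cons, gain, neg_neg, hnil]
        exact pow_combine E (by omega) (by omega) (by omega)
      · have := chainSum_eq_zero_of_slt (-c) p (u1.length + 2 + u2.length) hp (by omega)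
          _ hw'.refl (by simp; omega) (by
            have := slt_or (x := -d) (y := -c) (by grind) (by grind) (by grind)
            simpa using this.resolve_left hdc)
        rw [this]
        have z1 : ind (slt a (-d) ∧ slt (-d) (-c)) = 0 := if_neg fun h => hdc h.2
        rw [mul_zero, add_zero, z1, hnil]
        ring
    · rw [if_neg had]
      have z1 : ind (slt a (-d) ∧ slt (-d) (-c)) = 0 := if_neg fun h => had h.1
      rw [add_zero, z1, hnil]
      ring

/-! ### Back to windows and words -/

theorem signed_of_mem {n : ℕ} {w : List ℤ} (hw : w ∈ allWindows n) : Signed w ∧ w.length = n := by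
  simp only [allWindows, Finset.mem_image, Finset.mem_univ, true_and] at hw
  obtain ⟨⟨σ, ε⟩, rfl⟩ := hw
  refine ⟨⟨?_, ?_⟩, by simp⟩
  · simp only [List.mem_map, List.mem_finRange, true_and]
    rintro x ⟨i, rfl⟩
    split_ifs <;> omega
  · rw [List.pairwise_map]
    refine (List.nodup_finRange n).imp fun {i j} hij => ?_
    have : (σ i : ℕ) ≠ σ j := fun h => hij (σ.injective (Fin.ext h))
    dsimp only
    split_ifs <;> omega

theorem finsum_eq_chainSum (b : ℤ) (w : List ℤ) (Γ : List (ℕ × ℤ)) :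
    (∑ᶠ (J : Finset ℕ) (_ : J ⊆ Finset.range Γ.length ∧ incChain w (selChain Γ J) = true ∧
        (applyAll w (selChain Γ J)).getD 0 0 = b),
      (X : ℤ[X]) ^ ((len (applyAll w (selChain Γ J)) - len w - J.card) / 2) * (1 - X) ^ J.card) =
      chainSum b w Γ := by
  rw [finsum_eq_sum_of_support_subset (s := (Finset.range Γ.length).powerset)]
  · refine Finset.sum_congr rfl fun J hJ => ?_
    rw [finsum_eq_if, wt, length_selChain]
    simp only [Finset.mem_powerset.1 hJ, true_and]
  · intro J hJ
    by_contra hn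
    refine hJ ?_
    dsimp only
    rw [finsum_eq_if, if_neg]
    exact fun h => hn (Finset.mem_coe.2 (Finset.mem_powerset.2 h.1))

/-- formula (6.6) in the proof of Proposition 6.3: the sum
over increasing-admissible subsequences of the suffix `Δ_{\bar s}`, with
`c = w(q)`, `b = -c`, `a = w(1) ≺ b`. -/
theorem delta_sum_neg_suffix (n : ℕ) (w : List ℤ) (hw : w ∈ allWindows n)
    (p q s : ℕ) (hp1 : 1 ≤ p) (hp2 : p ≤ n) (hpq : p < q) (hqs : q ≤ s) (hsn : s ≤ n)
    (hab : slt (w.getD 0 0) (-(w.getD (q - 1) 0))) :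
    (∑ᶠ (J : Finset ℕ) (_ : J ⊆ Finset.range (deltaSuffixNeg p s).length ∧
        incChain w (selChain (deltaSuffixNeg p s) J) = true ∧
        (applyAll w (selChain (deltaSuffixNeg p s) J)).getD 0 0 = -(w.getD (q - 1) 0)),
      (Polynomial.X : Polynomial ℤ) ^
          ((len (applyAll w (selChain (deltaSuffixNeg p s) J)) - len w - J.card) / 2) *
        (1 - Polynomial.X) ^ J.card)
      = (Polynomial.X : Polynomial ℤ) ^
          (Nab (w.getD 0 0) (-(w.getD (q - 1) 0)) (word w 2 (q - 1)) +
            Nab (w.getD 0 0) (-(w.getD (q - 1) 0)) (word w (q + 1) s) +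
            Nab (w.getD 0 0) (-(w.getD (q - 1) 0)) (word w (s + 1) n) +
            Nab (w.getD 0 0) (-(w.getD (q - 1) 0)) ((word w (s + 1) n).map (fun x => -x)) +
            (if 0 < w.getD 0 0 ∧ 0 < w.getD (q - 1) 0 then 1 else 0)) *
          (1 - Polynomial.X) := by
  obtain ⟨hS, hlen⟩ := signed_of_mem hw
  rw [finsum_eq_chainSum]
  obtain ⟨a, u1, c, r, rfl, hq⟩ := exists_split w (q - 1) (by omega) (by omega)
  obtain ⟨u2, v, rfl, hu2⟩ : ∃ u2 v, r = u2 ++ v ∧ u2.length = s - q := by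
    refine ⟨r.take (s - q), r.drop (s - q), by simp, ?_⟩
    simp at hlen ⊢
    omega
  obtain rfl : q = u1.length + 2 := by omega
  obtain rfl : s = u1.length + 2 + u2.length := by omega
  have hn : n = u1.length + 2 + u2.length + v.length := by simp at hlen; omega
  have g0 : (a :: u1 ++ c :: (u2 ++ v)).getD 0 0 = a := by simp
  have g1 : (a :: u1 ++ c :: (u2 ++ v)).getD (u1.length + 2 - 1) 0 = c := by simp
  have w1 : word (a :: u1 ++ c :: (u2 ++ v)) 2 (u1.length + 2 - 1) = u1 := by simp [word]
  have w2 : word (a :: u1 ++ c :: (u2 ++ v)) (u1.length + 2 + 1) (u1.length + 2 + u2.length)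
      = u2 := by
    rw [show a :: u1 ++ c :: (u2 ++ v) = (a :: u1 ++ [c]) ++ (u2 ++ v) by simp, word,
      List.drop_left' (by simp), List.take_left' (by omega)]
  have w3 : word (a :: u1 ++ c :: (u2 ++ v)) (u1.length + 2 + u2.length + 1) n = v := by
    rw [show a :: u1 ++ c :: (u2 ++ v) = (a :: u1 ++ c :: u2) ++ v by simp, word,
      List.drop_left' (by simp; omega), List.take_of_length_le (by omega)]
  rw [g0, g1] at hab
  rw [g0, g1, w1, w2, w3]
  exact chainSum_main p hp1 u2 a c u1 v hS hab (by omega)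
end HL
end
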